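/- arXiv:2309.14607 — 3 statements merged into one kernel-verified Lean document; each statement's English description precedes it below -/
import Mathlib

section
/- Let X be a quasi-Banach space over 𝔽 = ℝ or ℂ and let 𝒳 = (x_n)_{n∈ℕ} be a basis of X. Then 𝒳 is greedy if and only if 𝒳 is unsigned-relaxed greedy for polynomials with constant coefficients (URGPCC), i.e., there exists C > 0 such that ‖f − P_A(f)‖ ≤ C·ϱ_m(f) for every f ∈ X, every m ∈ ℕ, and every greedy set A of f of cardinality m. -/
open scoped BigOperators

noncomputable section

/-- A basis of a quasi-Banach space over `𝕜` (`𝕜 = ℝ` or `ℂ`), bundled with the quasi-norm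
`N`, the basis vectors `e`, and the biorthogonal functionals `coord`. -/
structure QBasis (𝕜 : Type*) [RCLike 𝕜] (X : Type*) [AddCommGroup X] [Module 𝕜 X] :
    Type _ where
  /-- the quasi-norm of the space -/
  N : X → ℝ
  N_nonneg : ∀ f : X, 0 ≤ N f
  N_eq_zero_iff : ∀ f : X, N f = 0 ↔ f = 0
  N_smul : ∀ (t : 𝕜) (f : X), N (t • f) = ‖t‖ * N f
  quasi_triangle : ∃ c : ℝ, 1 ≤ c ∧ ∀ f g : X, N (f + g) ≤ c * (N f + N g)
  /-- completeness with respect to the quasi-norm -/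
  complete : ∀ u : ℕ → X,
      (∀ ε : ℝ, 0 < ε → ∃ n₀ : ℕ, ∀ m n : ℕ, n₀ ≤ m → n₀ ≤ n → N (u m - u n) < ε) →
      ∃ f : X, ∀ ε : ℝ, 0 < ε → ∃ n₀ : ℕ, ∀ n : ℕ, n₀ ≤ n → N (u n - f) < ε
  /-- the basis vectors -/
  e : ℕ → X
  /-- the biorthogonal functionals -/
  coord : ℕ → X →ₗ[𝕜] 𝕜
  biorth : ∀ n m : ℕ, coord n (e m) = if n = m then (1 : 𝕜) else 0
  /-- the closed linear span of the basis vectors is the whole space -/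
  dense_span : ∀ f : X, ∀ ε : ℝ, 0 < ε →
      ∃ g ∈ Submodule.span 𝕜 (Set.range e), N (f - g) < ε
  e_bdd : ∃ c : ℝ, ∀ n : ℕ, N (e n) ≤ c
  coord_bdd : ∃ c : ℝ, ∀ (n : ℕ) (f : X), ‖coord n f‖ ≤ c * N f

namespace QBasis

variable {𝕜 : Type*} [RCLike 𝕜] {X : Type*} [AddCommGroup X] [Module 𝕜 X]

/-- The projection `P_A f = ∑_{n ∈ A} x_n^*(f) x_n`. -/
def proj (bs : QBasis 𝕜 X) (A : Finset ℕ) (f : X) : X :=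
  ∑ n ∈ A, bs.coord n f • bs.e n

/-- `A` is a greedy set of `f`: `min_{n ∈ A} |x_n^*(f)| ≥ max_{m ∉ A} |x_m^*(f)|`. -/
def IsGreedySet (bs : QBasis 𝕜 X) (f : X) (A : Finset ℕ) : Prop :=
  ∀ n ∈ A, ∀ m : ℕ, m ∉ A → ‖bs.coord m f‖ ≤ ‖bs.coord n f‖

/-- `𝟙_{ε,A} = ∑_{j ∈ A} ε_j x_j`. -/
def indSign (bs : QBasis 𝕜 X) (ε : ℕ → 𝕜) (A : Finset ℕ) : X :=
  ∑ j ∈ A, ε j • bs.e j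

/-- `𝟙_A = ∑_{j ∈ A} x_j`. -/
def ind (bs : QBasis 𝕜 X) (A : Finset ℕ) : X := ∑ j ∈ A, bs.e j

/-- `ε` is a sign on `A`. -/
def IsSign (ε : ℕ → 𝕜) (A : Finset ℕ) : Prop := ∀ j ∈ A, ‖ε j‖ = 1

/-- `min_{n ∈ A} |x_n^*(f)|`. -/
def minCoef (bs : QBasis 𝕜 X) (f : X) (A : Finset ℕ) : ℝ :=
  sInf ((fun n => ‖bs.coord n f‖) '' (A : Set ℕ))

/-- `‖f − P_A(f)‖ ≤ C·σ_m(f)` for every greedy set `A` of cardinality `m`. -/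
def IsGreedyWith (bs : QBasis 𝕜 X) (C : ℝ) : Prop :=
  ∀ (f : X) (A B : Finset ℕ) (a : ℕ → 𝕜), bs.IsGreedySet f A → B.card ≤ A.card →
    bs.N (f - bs.proj A f) ≤ C * bs.N (f - ∑ j ∈ B, a j • bs.e j)

/-- `‖f − P_A(f)‖ ≤ C·ρ_m(f)` for every greedy set `A` of cardinality `m`, where
`ρ_m(f) = inf {‖f − α 𝟙_{ε,B}‖ : |B| = m, ε sign}` and `α = min_{n ∈ A} |x_n^*(f)|`. -/
def IsRGPCCWith (bs : QBasis 𝕜 X) (C : ℝ) : Prop :=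
  ∀ (f : X) (A B : Finset ℕ) (ε : ℕ → 𝕜), bs.IsGreedySet f A → B.card = A.card →
    IsSign ε B →
    bs.N (f - bs.proj A f) ≤ C * bs.N (f - ((bs.minCoef f A : ℝ) : 𝕜) • bs.indSign ε B)

/-- `‖f − P_A(f)‖ ≤ C·ϱ_m(f)` for every greedy set `A` of cardinality `m`, where
`ϱ_m(f) = inf {‖f − α 𝟙_B‖ : |B| = m}` and `α = min_{n ∈ A} |x_n^*(f)|`. -/
def IsURGPCCWith (bs : QBasis 𝕜 X) (C : ℝ) : Prop :=
  ∀ (f : X) (A B : Finset ℕ), bs.IsGreedySet f A → B.card = A.card →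
    bs.N (f - bs.proj A f) ≤ C * bs.N (f - ((bs.minCoef f A : ℝ) : 𝕜) • bs.ind B)

end QBasis

namespace QBasis

variable {𝕜 : Type*} [RCLike 𝕜] {X : Type*} [AddCommGroup X] [Module 𝕜 X]

lemma N_neg (bs : QBasis 𝕜 X) (f : X) : bs.N (-f) = bs.N f := by
  have h := bs.N_smul (-1) f
  simpa using h

lemma N_zero (bs : QBasis 𝕜 X) : bs.N 0 = 0 := (bs.N_eq_zero_iff 0).2 rfl

lemma N_sub_le (bs : QBasis 𝕜 X) {c : ℝ}
    (hc : ∀ f g : X, bs.N (f + g) ≤ c * (bs.N f + bs.N g)) (f g : X) :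
    bs.N (f - g) ≤ c * (bs.N f + bs.N g) := by
  rw [sub_eq_add_neg, ← bs.N_neg g]
  exact hc f (-g)

/-- The quasi-triangle inequality for finite sums. -/
lemma N_sum_le (bs : QBasis 𝕜 X) {c : ℝ} (hc1 : 1 ≤ c)
    (hc : ∀ f g : X, bs.N (f + g) ≤ c * (bs.N f + bs.N g)) {ι : Type*} (s : Finset ι)
    (f : ι → X) : bs.N (∑ i ∈ s, f i) ≤ c ^ s.card * ∑ i ∈ s, bs.N (f i) := by
  classical
  induction s using Finset.induction_on with
  | empty => simp [bs.N_zero]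
  | insert a s ha ih =>
    rw [Finset.sum_insert ha, Finset.sum_insert ha, Finset.card_insert_of_notMem ha]
    have h0 := bs.N_nonneg (f a)
    have h1 : 1 ≤ c ^ s.card := one_le_pow₀ hc1
    calc bs.N (f a + ∑ i ∈ s, f i)
        ≤ c * (bs.N (f a) + bs.N (∑ i ∈ s, f i)) := hc _ _
      _ ≤ c * (c ^ s.card * bs.N (f a) + c ^ s.card * ∑ i ∈ s, bs.N (f i)) := by
          gcongr
          nlinarith
      _ = c ^ (s.card + 1) * (bs.N (f a) + ∑ i ∈ s, bs.N (f i)) := by ring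

lemma coord_sum (bs : QBasis 𝕜 X) (a : ℕ → 𝕜) (B : Finset ℕ) (n : ℕ) :
    bs.coord n (∑ j ∈ B, a j • bs.e j) = if n ∈ B then a n else 0 := by
  simp [map_sum, bs.biorth]

lemma coord_ind (bs : QBasis 𝕜 X) (B : Finset ℕ) (n : ℕ) :
    bs.coord n (bs.ind B) = if n ∈ B then 1 else 0 := by
  simp [ind, map_sum, bs.biorth]

lemma coord_proj (bs : QBasis 𝕜 X) (A : Finset ℕ) (f : X) (n : ℕ) :
    bs.coord n (bs.proj A f) = if n ∈ A then bs.coord n f else 0 :=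
  bs.coord_sum (fun j => bs.coord j f) A n

lemma proj_congr (bs : QBasis 𝕜 X) {A : Finset ℕ} {f g : X}
    (h : ∀ n ∈ A, bs.coord n f = bs.coord n g) : bs.proj A f = bs.proj A g :=
  Finset.sum_congr rfl fun n hn => by rw [h n hn]

lemma proj_add (bs : QBasis 𝕜 X) (A : Finset ℕ) (f g : X) :
    bs.proj A (f + g) = bs.proj A f + bs.proj A g := by
  simp [proj, add_smul, Finset.sum_add_distrib]

lemma proj_sub (bs : QBasis 𝕜 X) (A : Finset ℕ) (f g : X) :
    bs.proj A (f - g) = bs.proj A f - bs.proj A g := by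
  simp [proj, sub_smul, Finset.sum_sub_distrib]

lemma proj_neg (bs : QBasis 𝕜 X) (A : Finset ℕ) (f : X) :
    bs.proj A (-f) = -bs.proj A f := by
  simp [proj]

lemma proj_smul (bs : QBasis 𝕜 X) (A : Finset ℕ) (t : 𝕜) (f : X) :
    bs.proj A (t • f) = t • bs.proj A f := by
  simp [proj, Finset.smul_sum, mul_smul]

lemma proj_ind_of_subset (bs : QBasis 𝕜 X) {A B : Finset ℕ} (h : A ⊆ B) :
    bs.proj A (bs.ind B) = bs.ind A :=
  Finset.sum_congr rfl fun n hn => by simp [coord_ind, h hn]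

lemma proj_union (bs : QBasis 𝕜 X) {A B : Finset ℕ} (h : Disjoint A B) (f : X) :
    bs.proj (A ∪ B) f = bs.proj A f + bs.proj B f :=
  Finset.sum_union h

lemma minCoef_eq (bs : QBasis 𝕜 X) {f : X} {A : Finset ℕ} {d : ℕ} (hd : d ∈ A)
    (h : ∀ n ∈ A, ‖bs.coord d f‖ ≤ ‖bs.coord n f‖) : bs.minCoef f A = ‖bs.coord d f‖ := by
  refine IsLeast.csInf_eq ⟨⟨d, hd, rfl⟩, ?_⟩
  rintro _ ⟨n, hn, rfl⟩
  exact h n hn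

/-- Coordinates with nonnegative real part can be suppressed, provided that
some coordinate outside of the suppressed ones vanishes. -/
lemma IsURGPCCWith.suppress_of_coord_eq_zero {bs : QBasis 𝕜 X} {C : ℝ} (h : bs.IsURGPCCWith C)
    {g : X} {B : Finset ℕ} {d : ℕ} (hd : d ∉ B) (hgd : bs.coord d g = 0)
    (hB : ∀ n ∈ B, 0 ≤ RCLike.re (bs.coord n g)) :
    bs.N (g - bs.proj B g) ≤ C * bs.N g := by
  obtain ⟨b, hb⟩ := bs.coord_bdd
  obtain ⟨α, hα⟩ : ∃ α : ℝ, ∀ n, ‖bs.coord n g‖ ≤ α := ⟨_, fun n => hb n g⟩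
  have hα0 : 0 ≤ α := (norm_nonneg _).trans (hα 0)
  set D := insert d B with hD
  set F := g + (α : 𝕜) • bs.ind D with hF
  have hFd : ‖bs.coord d F‖ = α := by
    simp [hF, coord_ind, hD, hgd, abs_of_nonneg hα0]
  have hFD : ∀ n ∈ D, α ≤ ‖bs.coord n F‖ := by
    intro n hn
    rcases Finset.mem_insert.1 hn with rfl | hnB
    · exact hFd.ge
    · have : α ≤ RCLike.re (bs.coord n F) := by
        simp [hF, coord_ind, hn, hB n hnB]
      exact this.trans (RCLike.re_le_norm _)
  have hFout : ∀ n, n ∉ D → ‖bs.coord n F‖ ≤ α := by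
    intro n hn
    simpa [hF, coord_ind, hn] using hα n
  have hmin : bs.minCoef F D = α := by
    rw [bs.minCoef_eq (Finset.mem_insert_self d B) (fun n hn => hFd.trans_le (hFD n hn)), hFd]
  have key := h F D D (fun n hn m hm => (hFout m hm).trans (hFD n hn)) rfl
  have hproj : bs.proj D F = bs.proj B g + (α : 𝕜) • bs.ind D := by
    rw [hF, proj_add, proj_smul, proj_ind_of_subset _ (Finset.Subset.refl D)]
    congr 1
    rw [hD, proj, Finset.sum_insert hd, hgd, zero_smul, zero_add, proj]
  rw [hmin, hproj, hF] at key
  simpa using key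

/-- A URGPCC basis is suppression unconditional. -/
lemma IsURGPCCWith.exists_suppress_le {bs : QBasis 𝕜 X} {C : ℝ} (hC : 0 < C)
    (h : bs.IsURGPCCWith C) :
    ∃ K : ℝ, 0 ≤ K ∧ ∀ (B : Finset ℕ) (f : X), bs.N (f - bs.proj B f) ≤ K * bs.N f := by
  obtain ⟨c, hc1, hc⟩ := bs.quasi_triangle
  obtain ⟨b, hb⟩ := bs.coord_bdd
  obtain ⟨a, ha⟩ := bs.e_bdd
  have ha0 : 0 ≤ a := (bs.N_nonneg _).trans (ha 0)
  have hcoord : ∀ (d : ℕ) (f : X), bs.N (bs.coord d f • bs.e d) ≤ |b| * a * bs.N f := by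
    intro d f
    rw [bs.N_smul]
    have := bs.N_nonneg f
    calc ‖bs.coord d f‖ * bs.N (bs.e d) ≤ (|b| * bs.N f) * a := by
          refine mul_le_mul ((hb d f).trans ?_) (ha d) (bs.N_nonneg _) (by positivity)
          gcongr
          exact le_abs_self b
      _ = |b| * a * bs.N f := by ring
  set K := c * (C * (c * (1 + |b| * a)) + |b| * a) with hK
  have hK0 : 0 ≤ K := by positivity
  have hpos : ∀ (B : Finset ℕ) (f : X), (∀ n ∈ B, 0 ≤ RCLike.re (bs.coord n f)) →
      bs.N (f - bs.proj B f) ≤ K * bs.N f := by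
    intro B f hB
    obtain ⟨d, hd⟩ := Infinite.exists_notMem_finset B
    set g := f - bs.coord d f • bs.e d with hg
    have hgB : ∀ n ∈ B, bs.coord n g = bs.coord n f := by
      intro n hn
      have : n ≠ d := fun h => hd (h ▸ hn)
      simp [hg, bs.biorth, this]
    have h1 := h.suppress_of_coord_eq_zero (g := g) hd (by simp [hg, bs.biorth])
      (fun n hn => by rw [hgB n hn]; exact hB n hn)
    rw [bs.proj_congr hgB] at h1
    have h2 : bs.N g ≤ c * (bs.N f + |b| * a * bs.N f) :=
      (bs.N_sub_le hc _ _).trans (by gcongr; exact hcoord d f)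
    calc bs.N (f - bs.proj B f) = bs.N ((g - bs.proj B f) + bs.coord d f • bs.e d) := by
          congr 1
          rw [hg]
          abel
      _ ≤ c * (bs.N (g - bs.proj B f) + bs.N (bs.coord d f • bs.e d)) := hc _ _
      _ ≤ c * (C * (c * (bs.N f + |b| * a * bs.N f)) + |b| * a * bs.N f) := by
          gcongr
          · exact h1.trans (by gcongr)
          · exact hcoord d f
      _ = K * bs.N f := by rw [hK]; ring
  refine ⟨K * K, by positivity, fun B f => ?_⟩
  classical
  set P := B.filter (fun n => 0 ≤ RCLike.re (bs.coord n f))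
  set Q := B.filter (fun n => ¬ 0 ≤ RCLike.re (bs.coord n f))
  have hPQ : Disjoint P Q := Finset.disjoint_filter_filter_not _ _ _
  have hB : P ∪ Q = B := Finset.filter_union_filter_not_eq _ _
  set g := f - bs.proj P f with hg
  have hgQ : ∀ n ∈ Q, bs.coord n g = bs.coord n f := by
    intro n hn
    simp [hg, coord_proj, Finset.disjoint_right.1 hPQ hn]
  have h1 : bs.N g ≤ K * bs.N f := hpos P f fun n hn => (Finset.mem_filter.1 hn).2
  have h2 := hpos Q (-g) (fun n hn => by
    have := (Finset.mem_filter.1 hn).2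
    rw [map_neg, map_neg, hgQ n hn]
    linarith)
  have h3 : -g - bs.proj Q (-g) = -(f - bs.proj B f) := by
    rw [proj_neg, bs.proj_congr hgQ, ← hB, bs.proj_union hPQ, hg]
    abel
  rw [h3, N_neg, N_neg] at h2
  calc bs.N (f - bs.proj B f) ≤ K * bs.N g := h2
    _ ≤ K * (K * bs.N f) := by gcongr
    _ = K * K * bs.N f := by ring

/-- If the coordinate projections are uniformly bounded, then any vector with coefficients
of modulus at most one is dominated by the indicator of its support. -/
lemma exists_sum_le_ind (bs : QBasis 𝕜 X) {K : ℝ} (hK : 0 ≤ K)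
    (h : ∀ (B : Finset ℕ) (f : X), bs.N (bs.proj B f) ≤ K * bs.N f) :
    ∃ L : ℝ, 0 ≤ L ∧ ∀ (B : Finset ℕ) (u : ℕ → 𝕜), (∀ j ∈ B, ‖u j‖ ≤ 1) →
      bs.N (∑ j ∈ B, u j • bs.e j) ≤ L * bs.N (bs.ind B) := by
  classical
  obtain ⟨c, hc1, hc⟩ := bs.quasi_triangle
  have hc0 : 0 < c := by linarith
  set η : ℝ := 1 / (2 * c) with hη
  have hη0 : 0 < η := by positivity
  obtain ⟨T, hTsub, hTfin, hTcov⟩ :=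
    (isCompact_closedBall (0 : 𝕜) 1).finite_cover_balls hη0
  lift T to Finset 𝕜 using hTfin
  have hnet : ∀ z : 𝕜, ‖z‖ ≤ 1 → ∃ w ∈ T, ‖z - w‖ ≤ η := by
    intro z hz
    have hz' := hTcov (by simpa using hz : z ∈ Metric.closedBall (0 : 𝕜) 1)
    simp only [Set.mem_iUnion, Metric.mem_ball, dist_eq_norm] at hz'
    obtain ⟨w, hw, hzw⟩ := hz'
    exact ⟨w, hw, hzw.le⟩
  set M : ℝ := c ^ T.card * (T.card * K) with hM
  refine ⟨2 * (c * M), by positivity, fun B => ?_⟩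
  set S : Set ℝ := {r | ∃ u : ℕ → 𝕜, (∀ j ∈ B, ‖u j‖ ≤ 1) ∧ r = bs.N (∑ j ∈ B, u j • bs.e j)}
    with hS
  have hbdd : BddAbove S := by
    refine ⟨c ^ B.card * ∑ j ∈ B, bs.N (bs.e j), ?_⟩
    rintro _ ⟨u, hu, rfl⟩
    refine (bs.N_sum_le hc1 hc B _).trans ?_
    gcongr with j hj
    rw [bs.N_smul]
    exact mul_le_of_le_one_left (bs.N_nonneg _) (hu j hj)
  have hne : S.Nonempty := ⟨_, fun _ => 0, by simp, rfl⟩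
  have himp : ∀ r ∈ S, r ≤ c * (η * sSup S + M * bs.N (bs.ind B)) := by
    rintro _ ⟨u, hu, rfl⟩
    choose! w hwT hw using hnet
    have hsplit : ∑ j ∈ B, u j • bs.e j =
        (∑ j ∈ B, (u j - w (u j)) • bs.e j) + ∑ j ∈ B, w (u j) • bs.e j := by
      rw [← Finset.sum_add_distrib]
      exact Finset.sum_congr rfl fun j _ => by rw [← add_smul, sub_add_cancel]
    rw [hsplit]
    refine (hc _ _).trans ?_
    gcongr
    · have hmem :
          bs.N (∑ j ∈ B, (((η⁻¹ : ℝ) : 𝕜) * (u j - w (u j))) • bs.e j) ≤ sSup S := by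
        refine le_csSup hbdd ⟨fun j => ((η⁻¹ : ℝ) : 𝕜) * (u j - w (u j)), fun j hj => ?_, rfl⟩
        rw [norm_mul, RCLike.norm_ofReal, abs_of_pos (inv_pos.2 hη0), inv_mul_le_iff₀ hη0, mul_one]
        exact hw _ (hu j hj)
      have heq : ∑ j ∈ B, (((η⁻¹ : ℝ) : 𝕜) * (u j - w (u j))) • bs.e j =
          ((η⁻¹ : ℝ) : 𝕜) • ∑ j ∈ B, (u j - w (u j)) • bs.e j := by
        simp [Finset.smul_sum, mul_smul]
      simp only [heq, bs.N_smul, RCLike.norm_ofReal, abs_of_pos (inv_pos.2 hη0)] at hmem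
      rwa [inv_mul_le_iff₀ hη0] at hmem
    · have hgroup : ∑ j ∈ B, w (u j) • bs.e j =
          ∑ z ∈ T, z • bs.ind (B.filter fun j => w (u j) = z) := by
        rw [← Finset.sum_fiberwise_of_maps_to (fun j hj => hwT _ (hu j hj))]
        refine Finset.sum_congr rfl fun z _ => ?_
        rw [ind, Finset.smul_sum]
        exact Finset.sum_congr rfl fun j hj => by rw [(Finset.mem_filter.1 hj).2]
      rw [hgroup]
      refine (bs.N_sum_le hc1 hc T _).trans ?_
      rw [hM, mul_assoc, mul_assoc, ← nsmul_eq_mul]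
      gcongr
      refine Finset.sum_le_card_nsmul _ _ _ fun z hz => ?_
      rw [bs.N_smul, ← bs.proj_ind_of_subset (Finset.filter_subset _ B)]
      have hz1 : ‖z‖ ≤ 1 := by simpa using hTsub hz
      exact (mul_le_of_le_one_left (bs.N_nonneg _) hz1).trans (h _ _)
  have hsup : sSup S ≤ c * (η * sSup S + M * bs.N (bs.ind B)) := csSup_le hne himp
  have hcη : c * η = 1 / 2 := by rw [hη]; field_simp
  intro u hu
  have hle : bs.N (∑ j ∈ B, u j • bs.e j) ≤ sSup S := le_csSup hbdd ⟨u, hu, rfl⟩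
  have : c * (η * sSup S + M * bs.N (bs.ind B)) =
      c * η * sSup S + c * M * bs.N (bs.ind B) := by ring
  rw [this, hcη] at hsup
  linarith

/-- Indicators are dominated by vectors with disjoint support of the same size and
larger coefficients. -/
lemma IsURGPCCWith.ind_le {bs : QBasis 𝕜 X} {C : ℝ} (h : bs.IsURGPCCWith C) {f : X}
    {A B : Finset ℕ} (hAB : Disjoint A B) (hcard : B.card = A.card) :
    bs.N (((bs.minCoef f A : ℝ) : 𝕜) • bs.ind B) ≤ C * bs.N (bs.proj A f) := by
  set α := bs.minCoef f A with hα
  have hα0 : 0 ≤ α := by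
    refine Real.sInf_nonneg ?_
    rintro _ ⟨n, -, rfl⟩
    exact norm_nonneg _
  set F := bs.proj A f + (α : 𝕜) • bs.ind B with hF
  have hFA : ∀ n ∈ A, bs.coord n F = bs.coord n f := fun n hn => by
    simp [hF, coord_proj, coord_ind, hn, Finset.disjoint_left.1 hAB hn]
  have hmin : bs.minCoef F A = α := by
    rw [hα, minCoef, minCoef]
    congr 1
    exact Set.image_congr fun n hn => by rw [hFA n hn]
  have hgr : bs.IsGreedySet F A := by
    intro n hn m hm
    have hle : α ≤ ‖bs.coord n f‖ := by
      refine csInf_le ⟨0, ?_⟩ ⟨n, hn, rfl⟩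
      rintro _ ⟨k, -, rfl⟩
      exact norm_nonneg _
    rw [hFA n hn]
    by_cases hmB : m ∈ B
    · simpa [hF, coord_proj, coord_ind, hm, hmB, abs_of_nonneg hα0] using hle
    · simp [hF, coord_proj, coord_ind, hm, hmB]
  have key := h F A B hgr hcard
  rw [hmin, bs.proj_congr hFA, hF] at key
  simpa using key

/-- A URGPCC basis is greedy. -/
lemma IsURGPCCWith.exists_isGreedyWith {bs : QBasis 𝕜 X} {C : ℝ} (hC : 0 < C)
    (h : bs.IsURGPCCWith C) : ∃ C' : ℝ, 0 < C' ∧ bs.IsGreedyWith C' := by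
  classical
  obtain ⟨c, hc1, hc⟩ := bs.quasi_triangle
  obtain ⟨K, hK, hsup⟩ := h.exists_suppress_le hC
  have hproj : ∀ (B : Finset ℕ) (f : X), bs.N (bs.proj B f) ≤ c * (1 + K) * bs.N f := by
    intro B f
    have h1 := bs.N_sub_le hc f (f - bs.proj B f)
    rw [sub_sub_cancel] at h1
    refine h1.trans ?_
    rw [mul_assoc, one_add_mul]
    gcongr
    exact hsup B f
  obtain ⟨L, hL, hdom⟩ := bs.exists_sum_le_ind (by positivity) hproj
  refine ⟨c * (K + L * (C * (c * (1 + K)))) + 1, by positivity, ?_⟩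
  intro f A B a hA hBA
  set y := f - ∑ j ∈ B, a j • bs.e j with hy
  have hyB : ∀ n, n ∉ B → bs.coord n y = bs.coord n f := fun n hn => by
    rw [hy, map_sub, coord_sum, if_neg hn, sub_zero]
  have hcard : (B \ A).card ≤ (A \ B).card := by
    have h1 := Finset.card_sdiff_add_card_inter B A
    have h2 := Finset.card_sdiff_add_card_inter A B
    rw [Finset.inter_comm] at h2
    omega
  obtain ⟨A₁, hA₁, hA₁card⟩ := Finset.exists_subset_card_eq hcard
  have hout : f - bs.proj (A ∪ B) f = y - bs.proj (A ∪ B) y := by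
    have : bs.proj (A ∪ B) (∑ j ∈ B, a j • bs.e j) = ∑ j ∈ B, a j • bs.e j := by
      rw [proj, ← Finset.sum_subset (Finset.subset_union_right : B ⊆ A ∪ B)]
      · exact Finset.sum_congr rfl fun n hn => by rw [coord_sum, if_pos hn]
      · intro n _ hn
        rw [coord_sum, if_neg hn, zero_smul]
    rw [hy, proj_sub, this]
    abel
  have hin : bs.N (bs.proj (B \ A) f) ≤ L * (C * (c * (1 + K) * bs.N y)) := by
    rcases Finset.eq_empty_or_nonempty A₁ with rfl | hne
    · have hempty : B \ A = ∅ := Finset.card_eq_zero.1 (by simpa using hA₁card.symm)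
      have := bs.N_nonneg y
      simp only [hempty, proj, Finset.sum_empty, N_zero]
      positivity
    · obtain ⟨d, hd, hdmin⟩ := A₁.exists_min_image (fun n => ‖bs.coord n f‖) hne
      have hmin := bs.minCoef_eq hd hdmin
      have hle : ∀ j ∈ B \ A, ‖bs.coord j f‖ ≤ ‖bs.coord d f‖ := fun j hj =>
        hA d (Finset.mem_sdiff.1 (hA₁ hd)).1 j (Finset.mem_sdiff.1 hj).2
      have hdisj : Disjoint A₁ (B \ A) :=
        Finset.disjoint_of_subset_left (hA₁.trans Finset.sdiff_subset) Finset.disjoint_sdiff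
      have h1 := h.ind_le (f := f) hdisj hA₁card.symm
      rw [hmin, ← bs.proj_congr fun n hn => hyB n (Finset.mem_sdiff.1 (hA₁ hn)).2] at h1
      set α := ‖bs.coord d f‖ with hα
      have hα0 : 0 ≤ α := norm_nonneg _
      have hscale : bs.proj (B \ A) f =
          (α : 𝕜) • ∑ j ∈ B \ A, ((α : 𝕜)⁻¹ * bs.coord j f) • bs.e j := by
        rw [Finset.smul_sum, proj]
        refine Finset.sum_congr rfl fun j hj => ?_
        rw [smul_smul]
        rcases eq_or_ne α 0 with h0 | h0
        · have : bs.coord j f = 0 := norm_le_zero_iff.1 ((hle j hj).trans h0.le)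
          simp [this]
        · rw [mul_inv_cancel_left₀ (by exact_mod_cast h0)]
      have h2 := hdom (B \ A) (fun j => (α : 𝕜)⁻¹ * bs.coord j f) (fun j hj => by
        rw [norm_mul, norm_inv, RCLike.norm_ofReal, abs_of_nonneg hα0]
        exact inv_mul_le_one_of_le₀ (hle j hj) hα0)
      rw [hscale, bs.N_smul]
      calc ‖(α : 𝕜)‖ * bs.N (∑ j ∈ B \ A, ((α : 𝕜)⁻¹ * bs.coord j f) • bs.e j)
          ≤ ‖(α : 𝕜)‖ * (L * bs.N (bs.ind (B \ A))) := by gcongr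
        _ = L * bs.N ((α : 𝕜) • bs.ind (B \ A)) := by rw [bs.N_smul]; ring
        _ ≤ L * (C * (c * (1 + K) * bs.N y)) := by
            gcongr
            refine h1.trans ?_
            gcongr
            exact hproj _ _
  have hsplit : f - bs.proj A f = (f - bs.proj (A ∪ B) f) + bs.proj (B \ A) f := by
    rw [← Finset.union_sdiff_self_eq_union, bs.proj_union Finset.disjoint_sdiff]
    abel
  have hy0 := bs.N_nonneg y
  calc bs.N (f - bs.proj A f)
      ≤ c * (bs.N (f - bs.proj (A ∪ B) f) + bs.N (bs.proj (B \ A) f)) := by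
        rw [hsplit]
        exact hc _ _
    _ ≤ c * (K * bs.N y + L * (C * (c * (1 + K) * bs.N y))) := by
        gcongr
        rw [hout]
        exact hsup _ _
    _ = c * (K + L * (C * (c * (1 + K)))) * bs.N y := by ring
    _ ≤ (c * (K + L * (C * (c * (1 + K)))) + 1) * bs.N y := by
        gcongr
        linarith

lemma IsGreedyWith.isURGPCCWith {bs : QBasis 𝕜 X} {C : ℝ} (h : bs.IsGreedyWith C) :
    bs.IsURGPCCWith C := by
  intro f A B hA hBA
  have := h f A B (fun _ => ((bs.minCoef f A : ℝ) : 𝕜)) hA hBA.le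
  rwa [← Finset.smul_sum] at this

end QBasis

/-- A basis of a quasi-Banach space over `ℝ` or `ℂ` is greedy if and only if
it is unsigned-relaxed greedy for polynomials with constant coefficients (URGPCC). -/
theorem greedy_iff_URGPCC {𝕜 : Type*} [RCLike 𝕜] {X : Type*} [AddCommGroup X] [Module 𝕜 X]
    (bs : QBasis 𝕜 X) :
    (∃ C : ℝ, 0 < C ∧ bs.IsGreedyWith C) ↔ (∃ C : ℝ, 0 < C ∧ bs.IsURGPCCWith C) := by
  exact ⟨fun ⟨C, hC, h⟩ => ⟨C, hC, h.isURGPCCWith⟩, fun ⟨_, hC, h⟩ => h.exists_isGreedyWith hC⟩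
end
end

section
/- Let 0 < p ≤ 1, let X be a p-Banach space over 𝔽 = ℝ or ℂ, let 𝒳 be a basis of X, and let f ∈ X with supp(f) = ∅ (i.e., x_n^*(f) = 0 for all n). Then for every finite D ⊂ ℕ and every ε > 0 there exists g ∈ span{𝒳} such that ‖f − g‖ < ε, sup_j |x_j^*(g)| < ε, and P_D(g) = P_D(f) = 0. -/
open scoped BigOperators

noncomputable section

/-- A basis of a `p`-Banach space over `𝕜` (`𝕜 = ℝ` or `ℂ`), bundled with the `p`-norm
`N`, the basis vectors `e`, and the biorthogonal functionals `coord`. -/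
structure PBasis (𝕜 : Type*) [RCLike 𝕜] (X : Type*) [AddCommGroup X] [Module 𝕜 X]
    (p : ℝ) : Type _ where
  /-- the `p`-norm of the space -/
  N : X → ℝ
  N_nonneg : ∀ f : X, 0 ≤ N f
  N_eq_zero_iff : ∀ f : X, N f = 0 ↔ f = 0
  N_smul : ∀ (t : 𝕜) (f : X), N (t • f) = ‖t‖ * N f
  N_padd : ∀ f g : X, N (f + g) ^ p ≤ N f ^ p + N g ^ p
  /-- completeness with respect to the `p`-norm -/
  complete : ∀ u : ℕ → X,
      (∀ ε : ℝ, 0 < ε → ∃ n₀ : ℕ, ∀ m n : ℕ, n₀ ≤ m → n₀ ≤ n → N (u m - u n) < ε) →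
      ∃ f : X, ∀ ε : ℝ, 0 < ε → ∃ n₀ : ℕ, ∀ n : ℕ, n₀ ≤ n → N (u n - f) < ε
  /-- the basis vectors -/
  e : ℕ → X
  /-- the biorthogonal functionals -/
  coord : ℕ → X →ₗ[𝕜] 𝕜
  biorth : ∀ n m : ℕ, coord n (e m) = if n = m then (1 : 𝕜) else 0
  /-- the closed linear span of the basis vectors is the whole space -/
  dense_span : ∀ f : X, ∀ ε : ℝ, 0 < ε →
      ∃ g ∈ Submodule.span 𝕜 (Set.range e), N (f - g) < ε
  e_bdd : ∃ c : ℝ, ∀ n : ℕ, N (e n) ≤ c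
  coord_bdd : ∃ c : ℝ, ∀ (n : ℕ) (f : X), ‖coord n f‖ ≤ c * N f

namespace PBasis

variable {𝕜 : Type*} [RCLike 𝕜] {X : Type*} [AddCommGroup X] [Module 𝕜 X] {p : ℝ}

/-- The projection `P_A f = ∑_{n ∈ A} x_n^*(f) x_n`. -/
def proj (bs : PBasis 𝕜 X p) (A : Finset ℕ) (f : X) : X :=
  ∑ n ∈ A, bs.coord n f • bs.e n

/-- The support of `f`. -/
def supp (bs : PBasis 𝕜 X p) (f : X) : Set ℕ := {n | bs.coord n f ≠ 0}

/-- `A` is a greedy set of `f`: `min_{n ∈ A} |x_n^*(f)| ≥ max_{m ∉ A} |x_m^*(f)|`. -/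
def IsGreedySet (bs : PBasis 𝕜 X p) (f : X) (A : Finset ℕ) : Prop :=
  ∀ n ∈ A, ∀ m : ℕ, m ∉ A → ‖bs.coord m f‖ ≤ ‖bs.coord n f‖

/-- `𝟙_{ε,A} = ∑_{j ∈ A} ε_j x_j`. -/
def indSign (bs : PBasis 𝕜 X p) (ε : ℕ → 𝕜) (A : Finset ℕ) : X :=
  ∑ j ∈ A, ε j • bs.e j

/-- `𝟙_A = ∑_{j ∈ A} x_j`. -/
def ind (bs : PBasis 𝕜 X p) (A : Finset ℕ) : X := ∑ j ∈ A, bs.e j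

/-- `ε` is a sign on `A`. -/
def IsSign (ε : ℕ → 𝕜) (A : Finset ℕ) : Prop := ∀ j ∈ A, ‖ε j‖ = 1

/-- `min_{n ∈ A} |x_n^*(f)|`. -/
def minCoef (bs : PBasis 𝕜 X p) (f : X) (A : Finset ℕ) : ℝ :=
  sInf ((fun n => ‖bs.coord n f‖) '' (A : Set ℕ))

/-- `‖f − P_A(f)‖ ≤ C·σ_m(f)` for every greedy set `A` of cardinality `m`. -/
def IsGreedyWith (bs : PBasis 𝕜 X p) (C : ℝ) : Prop :=
  ∀ (f : X) (A B : Finset ℕ) (a : ℕ → 𝕜), bs.IsGreedySet f A → B.card ≤ A.card →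
    bs.N (f - bs.proj A f) ≤ C * bs.N (f - ∑ j ∈ B, a j • bs.e j)

/-- `‖f − P_A(f)‖ ≤ C·ρ_m(f)` for every greedy set `A` of cardinality `m`, where
`ρ_m(f) = inf {‖f − α 𝟙_{ε,B}‖ : |B| = m, ε sign}` and `α = min_{n ∈ A} |x_n^*(f)|`. -/
def IsRGPCCWith (bs : PBasis 𝕜 X p) (C : ℝ) : Prop :=
  ∀ (f : X) (A B : Finset ℕ) (ε : ℕ → 𝕜), bs.IsGreedySet f A → B.card = A.card →
    IsSign ε B →
    bs.N (f - bs.proj A f) ≤ C * bs.N (f - ((bs.minCoef f A : ℝ) : 𝕜) • bs.indSign ε B)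

/-- `‖f − P_A(f)‖ ≤ C·ϱ_m(f)` for every greedy set `A` of cardinality `m`, where
`ϱ_m(f) = inf {‖f − α 𝟙_B‖ : |B| = m}` and `α = min_{n ∈ A} |x_n^*(f)|`. -/
def IsURGPCCWith (bs : PBasis 𝕜 X p) (C : ℝ) : Prop :=
  ∀ (f : X) (A B : Finset ℕ), bs.IsGreedySet f A → B.card = A.card →
    bs.N (f - bs.proj A f) ≤ C * bs.N (f - ((bs.minCoef f A : ℝ) : 𝕜) • bs.ind B)

/-- `K`-unconditionality. -/
def IsUncondWith (bs : PBasis 𝕜 X p) (K : ℝ) : Prop :=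
  ∀ (A : Finset ℕ) (f : X), bs.N (bs.proj A f) ≤ K * bs.N f

/-- `C`-quasi-greediness. -/
def IsQuasiGreedyWith (bs : PBasis 𝕜 X p) (C : ℝ) : Prop :=
  ∀ (f : X) (A : Finset ℕ), bs.IsGreedySet f A → bs.N (f - bs.proj A f) ≤ C * bs.N f

/-- `C`-almost-greediness. -/
def IsAlmostGreedyWith (bs : PBasis 𝕜 X p) (C : ℝ) : Prop :=
  ∀ (f : X) (A B : Finset ℕ), bs.IsGreedySet f A → B.card ≤ A.card →
    bs.N (f - bs.proj A f) ≤ C * bs.N (f - bs.proj B f)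

/-- `D`-democracy. -/
def IsDemocraticWith (bs : PBasis 𝕜 X p) (D : ℝ) : Prop :=
  ∀ A B : Finset ℕ, A.card ≤ B.card → bs.N (bs.ind A) ≤ D * bs.N (bs.ind B)

/-- `D`-superdemocracy. -/
def IsSuperdemocraticWith (bs : PBasis 𝕜 X p) (D : ℝ) : Prop :=
  ∀ (A B : Finset ℕ) (ε η : ℕ → 𝕜), A.card ≤ B.card → IsSign ε A → IsSign η B →
    bs.N (bs.indSign ε A) ≤ D * bs.N (bs.indSign η B)

/-- `A < B`, i.e. every element of `A` is smaller than every element of `B`. -/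
def FinsetBefore (A B : Finset ℕ) : Prop := ∀ a ∈ A, ∀ b ∈ B, a < b

open scoped Classical in
/-- `sgn z = z/|z|` (with the convention `sgn 0 = 1`). -/
def sgn (z : 𝕜) : 𝕜 := if z = 0 then 1 else z / ((‖z‖ : ℝ) : 𝕜)

end PBasis

namespace PBasis

variable {𝕜 : Type*} [RCLike 𝕜] {X : Type*} [AddCommGroup X] [Module 𝕜 X] {p : ℝ}

lemma N_sum_rpow_le (hp : 0 < p) (bs : PBasis 𝕜 X p) {ι : Type*} (s : Finset ι) (u : ι → X) :
    bs.N (∑ i ∈ s, u i) ^ p ≤ ∑ i ∈ s, bs.N (u i) ^ p := by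
  classical
  induction s using Finset.induction_on with
  | empty => simp [(bs.N_eq_zero_iff 0).2 rfl, Real.zero_rpow hp.ne']
  | insert a s ha ih =>
    rw [Finset.sum_insert ha, Finset.sum_insert ha]
    exact (bs.N_padd _ _).trans (by gcongr)

lemma coord_proj (bs : PBasis 𝕜 X p) (A : Finset ℕ) (f : X) (j : ℕ) :
    bs.coord j (bs.proj A f) = if j ∈ A then bs.coord j f else 0 := by
  simp [proj, bs.biorth]

lemma proj_mem_span (bs : PBasis 𝕜 X p) (A : Finset ℕ) (f : X) :
    bs.proj A f ∈ Submodule.span 𝕜 (Set.range bs.e) :=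
  Submodule.sum_mem _ fun n _ =>
    Submodule.smul_mem _ _ (Submodule.subset_span (Set.mem_range_self n))

lemma proj_eq_zero (bs : PBasis 𝕜 X p) {A : Finset ℕ} {f : X}
    (h : ∀ n ∈ A, bs.coord n f = 0) : bs.proj A f = 0 :=
  Finset.sum_eq_zero fun n hn => by rw [h n hn, zero_smul]

/-- If the coefficients of `f` are bounded by `a` and the basis vectors by `b`, then
`‖P_A f‖ ^ p ≤ |A| (a b) ^ p`. -/
lemma N_proj_rpow_le (hp : 0 < p) (bs : PBasis 𝕜 X p) (A : Finset ℕ) {f : X} {a b : ℝ}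
    (ha : ∀ n, ‖bs.coord n f‖ ≤ a) (hb : ∀ n, bs.N (bs.e n) ≤ b) :
    bs.N (bs.proj A f) ^ p ≤ A.card * (a * b) ^ p := by
  refine (bs.N_sum_rpow_le hp A _).trans ?_
  rw [← nsmul_eq_mul]
  refine Finset.sum_le_card_nsmul _ _ _ fun n _ => ?_
  refine Real.rpow_le_rpow (bs.N_nonneg _) ?_ hp.le
  rw [bs.N_smul]
  exact mul_le_mul (ha n) (hb n) (bs.N_nonneg _) ((norm_nonneg _).trans (ha n))

end PBasis

/-- (Lemma 3.5 ii).) Let `𝒳` be a basis of a `p`-Banach space and `f ∈ X` with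
`supp(f) = ∅`. For every finite `D` and `ε > 0` there is `g` in the span with `‖f − g‖ < ε`,
`sup_j |x_j^*(g)| < ε` and `P_D(g) = P_D(f) = 0`. -/
theorem approximation_in_span_empty_supp {𝕜 : Type*} [RCLike 𝕜] {X : Type*}
    [AddCommGroup X] [Module 𝕜 X] {p : ℝ} (hp : 0 < p) (hp1 : p ≤ 1) (bs : PBasis 𝕜 X p)
    (f : X) (hf : ∀ n : ℕ, bs.coord n f = 0) :
    ∀ (D : Finset ℕ) (ε : ℝ), 0 < ε →
      ∃ g ∈ Submodule.span 𝕜 (Set.range bs.e), bs.N (f - g) < ε ∧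
        (⨆ j : ℕ, ‖bs.coord j g‖) < ε ∧ bs.proj D g = 0 ∧ bs.proj D f = 0 := by
  classical
  intro D ε hε
  obtain ⟨c, hc⟩ := bs.coord_bdd
  obtain ⟨b, hb⟩ := bs.e_bdd
  have hb0 : 0 ≤ b := (bs.N_nonneg _).trans (hb 0)
  set C := max c 1
  have hC1 : 1 ≤ C := le_max_right _ _
  have hC : 0 < C := one_pos.trans_le hC1
  set K : ℝ := 1 + D.card * (C * b) ^ p
  have hK1 : 1 ≤ K := le_add_of_nonneg_right (by positivity)
  have hK : 0 < K := one_pos.trans_le hK1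
  have hL1 : 1 ≤ K ^ p⁻¹ := Real.one_le_rpow hK1 (inv_nonneg.2 hp.le)
  obtain ⟨δ, hδ, hCδ, hδK⟩ : ∃ δ : ℝ, 0 < δ ∧ C * δ < ε ∧ δ ^ p * K < ε ^ p := by
    refine ⟨ε / 2 / (C * K ^ p⁻¹), by positivity, ?_, ?_⟩
    · have : C * (ε / 2 / (C * K ^ p⁻¹)) = ε / 2 / K ^ p⁻¹ := by field_simp
      rw [this]
      exact (div_le_self (by positivity) hL1).trans_lt (half_lt_self hε)
    · calc (ε / 2 / (C * K ^ p⁻¹)) ^ p * K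
          = (ε / 2 / (C * K ^ p⁻¹)) ^ p * (K ^ p⁻¹) ^ p := by
            rw [Real.rpow_inv_rpow hK.le hp.ne']
        _ = (ε / 2 / C) ^ p := by
            rw [← Real.mul_rpow (by positivity) (by positivity)]
            congr 1
            field_simp
        _ < ε ^ p := by
            refine Real.rpow_lt_rpow (by positivity) ?_ hp
            exact (div_le_self (by positivity) hC1).trans_lt (half_lt_self hε)
  obtain ⟨h, hh, hfh⟩ := bs.dense_span f δ hδ
  have hcoord : ∀ n, ‖bs.coord n h‖ ≤ C * δ := fun n => by
    have key := hc n (f - h)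
    rw [map_sub, hf n, zero_sub, norm_neg] at key
    exact key.trans (mul_le_mul (le_max_left _ _) hfh.le (bs.N_nonneg _) hC.le)
  have hg : ∀ n, bs.coord n (h - bs.proj D h) = if n ∈ D then 0 else bs.coord n h := fun n => by
    rw [map_sub, bs.coord_proj]
    split_ifs <;> simp
  refine ⟨h - bs.proj D h, Submodule.sub_mem _ hh (bs.proj_mem_span D h), ?_, ?_,
    bs.proj_eq_zero fun n hn => by rw [hg, if_pos hn], bs.proj_eq_zero fun n _ => hf n⟩
  · refine (Real.rpow_lt_rpow_iff (bs.N_nonneg _) hε.le hp).1 ?_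
    calc bs.N (f - (h - bs.proj D h)) ^ p
        = bs.N ((f - h) + bs.proj D h) ^ p := by rw [sub_sub_eq_add_sub, add_sub_right_comm]
      _ ≤ bs.N (f - h) ^ p + bs.N (bs.proj D h) ^ p := bs.N_padd _ _
      _ ≤ δ ^ p + D.card * (C * δ * b) ^ p :=
          add_le_add (Real.rpow_le_rpow (bs.N_nonneg _) hfh.le hp.le)
            (bs.N_proj_rpow_le hp D hcoord hb)
      _ = δ ^ p * K := by
          rw [mul_right_comm, Real.mul_rpow (by positivity) hδ.le]
          ring
      _ < ε ^ p := hδK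
  · refine (ciSup_le fun j => ?_).trans_lt hCδ
    rw [hg]
    split_ifs
    · simpa using (by positivity : 0 ≤ C * δ)
    · exact hcoord j
end
end

section
/- Let 0 < p ≤ 1, let X be a p-Banach space over 𝔽 = ℝ or ℂ, and let 𝒳 be a basis of X. Then 𝒳 is almost greedy if and only if there is C > 0 such that ‖f − P_A(f)‖ ≤ C·‖f − (min_{n∈A}|x_n^*(f)|)·𝟙_{ε,B}‖ for all f ∈ X, all greedy sets A of f, all B ⊂ ℕ with |B| ≤ |A| and either A < B or B < A, and all signs ε on B. -/
open scoped BigOperators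

noncomputable section

namespace PBasis

variable {𝕜 : Type*} [RCLike 𝕜] {X : Type*} [AddCommGroup X] [Module 𝕜 X] {p : ℝ}

/-- The domination property: a finite linear combination with coefficients of modulus at most `α`
is controlled by any linear combination of at least as many basis vectors with coefficients of
modulus at least `α`. -/
def IsDominatingWith (bs : PBasis 𝕜 X p) (D : ℝ) : Prop :=
  ∀ (S T : Finset ℕ) (a b : ℕ → 𝕜) (α : ℝ), S.card ≤ T.card → (∀ n ∈ S, ‖a n‖ ≤ α) →
    (∀ n ∈ T, α ≤ ‖b n‖) → bs.N (bs.indSign a S) ≤ D * bs.N (bs.indSign b T)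

/-- The estimate by polynomials with constant-modulus coefficients and separated supports. -/
def IsSeparatedWith (bs : PBasis 𝕜 X p) (C : ℝ) : Prop :=
  ∀ (f : X) (A B : Finset ℕ) (ε : ℕ → 𝕜), bs.IsGreedySet f A → B.card ≤ A.card →
    (FinsetBefore A B ∨ FinsetBefore B A) → IsSign ε B →
    bs.N (f - bs.proj A f) ≤ C * bs.N (f - ((bs.minCoef f A : ℝ) : 𝕜) • bs.indSign ε B)

section Basic

variable (bs : PBasis 𝕜 X p)

theorem N_zero : bs.N 0 = 0 := (bs.N_eq_zero_iff 0).2 rfl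

theorem N_neg (f : X) : bs.N (-f) = bs.N f := by
  simpa using bs.N_smul (-1) f

theorem N_add_le (hp : 0 < p) (f g : X) :
    bs.N (f + g) ≤ 2 ^ (1 / p) * (bs.N f + bs.N g) := by
  have hf := bs.N_nonneg f
  have hg := bs.N_nonneg g
  rw [← Real.rpow_le_rpow_iff (bs.N_nonneg _) (by positivity) hp,
    Real.mul_rpow (by positivity) (by positivity), ← Real.rpow_mul (by norm_num),
    one_div_mul_cancel hp.ne', Real.rpow_one]
  have h1 : bs.N f ^ p ≤ (bs.N f + bs.N g) ^ p := Real.rpow_le_rpow hf (by linarith) hp.le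
  have h2 : bs.N g ^ p ≤ (bs.N f + bs.N g) ^ p := Real.rpow_le_rpow hg (by linarith) hp.le
  linarith [bs.N_padd f g]

theorem N_sub_le (hp : 0 < p) (f g : X) :
    bs.N (f - g) ≤ 2 ^ (1 / p) * (bs.N f + bs.N g) := by
  simpa [sub_eq_add_neg, bs.N_neg] using bs.N_add_le hp f (-g)

theorem coord_indSign (a : ℕ → 𝕜) (S : Finset ℕ) (m : ℕ) :
    bs.coord m (bs.indSign a S) = if m ∈ S then a m else 0 := by
  simp [indSign, bs.biorth]

theorem proj_eq_indSign (A : Finset ℕ) (f : X) :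
    bs.proj A f = bs.indSign (fun n => bs.coord n f) A := rfl

theorem proj_congr {A : Finset ℕ} {f g : X} (h : ∀ n ∈ A, bs.coord n f = bs.coord n g) :
    bs.proj A f = bs.proj A g :=
  Finset.sum_congr rfl fun n hn => by rw [h n hn]

theorem proj_sub (A : Finset ℕ) (f g : X) : bs.proj A (f - g) = bs.proj A f - bs.proj A g := by
  simp [proj, sub_smul]

theorem proj_indSign {a : ℕ → 𝕜} {S A : Finset ℕ} (h : S ⊆ A) :
    bs.proj A (bs.indSign a S) = bs.indSign a S := by
  rw [proj]
  simp_rw [bs.coord_indSign, ite_smul, zero_smul]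
  rw [← Finset.sum_filter, Finset.filter_mem_eq_inter, Finset.inter_eq_right.2 h, indSign]

theorem proj_union {A B : Finset ℕ} (h : Disjoint A B) (f : X) :
    bs.proj (A ∪ B) f = bs.proj A f + bs.proj B f :=
  Finset.sum_union h

theorem smul_indSign (c : 𝕜) (a : ℕ → 𝕜) (S : Finset ℕ) :
    c • bs.indSign a S = bs.indSign (fun n => c * a n) S := by
  simp [indSign, Finset.smul_sum, mul_smul]

theorem coord_add_indSign_left {a b : ℕ → 𝕜} {S T : Finset ℕ} (h : Disjoint S T) {n : ℕ}
    (hn : n ∈ S) : bs.coord n (bs.indSign a S + bs.indSign b T) = a n := by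
  simp [bs.coord_indSign, hn, Finset.disjoint_left.1 h hn]

theorem coord_add_indSign_right {a b : ℕ → 𝕜} {S T : Finset ℕ} (h : Disjoint S T) {n : ℕ}
    (hn : n ∈ T) : bs.coord n (bs.indSign a S + bs.indSign b T) = b n := by
  rw [add_comm, bs.coord_add_indSign_left h.symm hn]

theorem proj_add_indSign_left {a b : ℕ → 𝕜} {S T : Finset ℕ} (h : Disjoint S T) :
    bs.proj S (bs.indSign a S + bs.indSign b T) = bs.indSign a S :=
  Finset.sum_congr rfl fun n hn => by rw [bs.coord_add_indSign_left h hn]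

theorem proj_add_indSign_right {a b : ℕ → 𝕜} {S T : Finset ℕ} (h : Disjoint S T) :
    bs.proj T (bs.indSign a S + bs.indSign b T) = bs.indSign b T := by
  rw [add_comm, bs.proj_add_indSign_left h.symm]

theorem isGreedySet_add_indSign {a b : ℕ → 𝕜} {S T : Finset ℕ} (h : Disjoint S T) {α : ℝ}
    (ha : ∀ n ∈ S, ‖a n‖ ≤ α) (hb : ∀ n ∈ T, α ≤ ‖b n‖) :
    bs.IsGreedySet (bs.indSign a S + bs.indSign b T) T := by
  intro n hn m hm
  rw [bs.coord_add_indSign_right h hn]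
  by_cases hS : m ∈ S
  · rw [bs.coord_add_indSign_left h hS]
    exact (ha m hS).trans (hb n hn)
  · simp [bs.coord_indSign, hS, hm]

theorem minCoef_le {f : X} {A : Finset ℕ} {n : ℕ} (hn : n ∈ A) :
    bs.minCoef f A ≤ ‖bs.coord n f‖ :=
  csInf_le ((A.finite_toSet.image _).bddBelow) ⟨n, hn, rfl⟩

theorem exists_minCoef_eq (f : X) {A : Finset ℕ} (hA : A.Nonempty) :
    ∃ n ∈ A, bs.minCoef f A = ‖bs.coord n f‖ := by
  obtain ⟨n, hn, h⟩ := Set.Nonempty.csInf_mem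
    (Set.Nonempty.image (fun n => ‖bs.coord n f‖) (Finset.coe_nonempty.2 hA))
    (A.finite_toSet.image _)
  exact ⟨n, hn, h.symm⟩

theorem exists_card_eq_after (S : Finset ℕ) (k : ℕ) :
    ∃ H : Finset ℕ, H.card = k ∧ FinsetBefore S H := by
  refine ⟨Finset.Ico (S.sup id + 1) (S.sup id + 1 + k), by simp, fun s hs t ht => ?_⟩
  have h1 : s ≤ S.sup id := Finset.le_sup (f := id) hs
  have h2 := (Finset.mem_Ico.1 ht).1
  omega

theorem FinsetBefore.disjoint {A B : Finset ℕ} (h : FinsetBefore A B) : Disjoint A B :=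
  Finset.disjoint_left.2 fun n hA hB => lt_irrefl n (h n hA n hB)

theorem FinsetBefore.mono_left {A A' B : Finset ℕ} (h : FinsetBefore A B) (hA : A' ⊆ A) :
    FinsetBefore A' B := fun a ha b hb => h a (hA ha) b hb

end Basic

section Convexity

theorem exists_sign_norm_two_mul_sub_le (a : 𝕜) (ha : ‖a‖ ≤ 1) :
    ∃ ε : 𝕜, ‖ε‖ = 1 ∧ ‖2 * a - ε‖ ≤ 1 := by
  rcases eq_or_ne a 0 with rfl | h
  · exact ⟨1, by simp, by simp⟩
  have h0 : (0 : ℝ) < ‖a‖ := norm_pos_iff.2 h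
  have h0' : ((‖a‖ : ℝ) : 𝕜) ≠ 0 := by exact_mod_cast h0.ne'
  have hε : ‖a / ((‖a‖ : ℝ) : 𝕜)‖ = 1 := by
    rw [norm_div, RCLike.norm_ofReal, abs_norm, div_self h0.ne']
  refine ⟨a / ((‖a‖ : ℝ) : 𝕜), hε, ?_⟩
  have : 2 * a - a / ((‖a‖ : ℝ) : 𝕜) = ((2 * ‖a‖ - 1 : ℝ) : 𝕜) * (a / ((‖a‖ : ℝ) : 𝕜)) := by
    push_cast
    field_simp
  rw [this, norm_mul, hε, mul_one, RCLike.norm_ofReal, abs_le]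
  constructor <;> linarith

variable (bs : PBasis 𝕜 X p)

theorem N_indSign_rpow_le (hp : 0 < p) (a : ℕ → 𝕜) (S : Finset ℕ) :
    bs.N (bs.indSign a S) ^ p ≤ ∑ n ∈ S, (‖a n‖ * bs.N (bs.e n)) ^ p := by
  classical
  induction S using Finset.induction_on with
  | empty => simp [indSign, bs.N_zero, Real.zero_rpow hp.ne']
  | insert n S hn ih =>
    rw [indSign, Finset.sum_insert hn, Finset.sum_insert hn, ← bs.N_smul]
    exact (bs.N_padd _ _).trans (by gcongr; exact ih)

theorem N_indSign_rpow_le_of_norm_le_one (hp : 0 < p) {S : Finset ℕ} {D : ℝ}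
    (hD : ∀ ε : ℕ → 𝕜, IsSign ε S → bs.N (bs.indSign ε S) ≤ D) {a : ℕ → 𝕜}
    (ha : ∀ n ∈ S, ‖a n‖ ≤ 1) :
    bs.N (bs.indSign a S) ^ p ≤ D ^ p / (2 ^ p - 1) := by
  set U : Set ℝ := {x | ∃ a : ℕ → 𝕜, (∀ n ∈ S, ‖a n‖ ≤ 1) ∧ bs.N (bs.indSign a S) ^ p = x}
  have hU : BddAbove U := by
    refine ⟨∑ n ∈ S, bs.N (bs.e n) ^ p, ?_⟩
    rintro _ ⟨a, ha, rfl⟩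
    refine (bs.N_indSign_rpow_le hp a S).trans (Finset.sum_le_sum fun n hn => ?_)
    have := bs.N_nonneg (bs.e n)
    exact Real.rpow_le_rpow (by positivity) (mul_le_of_le_one_left this (ha n hn)) hp.le
  have h2 : (1 : ℝ) < 2 ^ p := Real.one_lt_rpow (by norm_num) hp
  have key : ∀ x ∈ U, x ≤ (D ^ p + sSup U) / 2 ^ p := by
    rintro _ ⟨a, ha, rfl⟩
    have hex : ∀ n, ∃ ε : 𝕜, n ∈ S → ‖ε‖ = 1 ∧ ‖2 * a n - ε‖ ≤ 1 := fun n => by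
      by_cases hn : n ∈ S
      · obtain ⟨ε, h⟩ := exists_sign_norm_two_mul_sub_le (a n) (ha n hn)
        exact ⟨ε, fun _ => h⟩
      · exact ⟨0, fun h => (hn h).elim⟩
    choose ε hε using hex
    have hsplit : (2 : 𝕜) • bs.indSign a S =
        bs.indSign ε S + bs.indSign (fun n => 2 * a n - ε n) S := by
      rw [smul_indSign, indSign, indSign, indSign, ← Finset.sum_add_distrib]
      refine Finset.sum_congr rfl fun n _ => ?_
      rw [← add_smul, add_sub_cancel]
    have h := bs.N_padd (bs.indSign ε S) (bs.indSign (fun n => 2 * a n - ε n) S)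
    rw [← hsplit, bs.N_smul, RCLike.norm_ofNat,
      Real.mul_rpow (by norm_num) (bs.N_nonneg _)] at h
    rw [le_div_iff₀ (by positivity), mul_comm]
    refine h.trans (add_le_add ?_ (le_csSup hU ⟨_, fun n hn => (hε n hn).2, rfl⟩))
    exact Real.rpow_le_rpow (bs.N_nonneg _) (hD ε fun n hn => (hε n hn).1) hp.le
  have hs : sSup U ≤ (D ^ p + sSup U) / 2 ^ p := csSup_le ⟨_, a, ha, rfl⟩ key
  refine (le_csSup hU ⟨a, ha, rfl⟩).trans ?_
  rw [le_div_iff₀ (by positivity)] at hs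
  rw [le_div_iff₀ (by linarith)]
  linarith

theorem N_indSign_le_of_norm_le (hp : 0 < p) {S : Finset ℕ} {D : ℝ}
    (hD : ∀ ε : ℕ → 𝕜, IsSign ε S → bs.N (bs.indSign ε S) ≤ D) {a : ℕ → 𝕜} {α : ℝ}
    (hα : 0 ≤ α) (ha : ∀ n ∈ S, ‖a n‖ ≤ α) :
    bs.N (bs.indSign a S) ≤ ((2 ^ p - 1)⁻¹) ^ (1 / p) * (α * D) := by
  have h2 : (0 : ℝ) < 2 ^ p - 1 := sub_pos.2 (Real.one_lt_rpow (by norm_num) hp)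
  have hD0 : 0 ≤ D := (bs.N_nonneg _).trans (hD (fun _ => 1) fun _ _ => by simp)
  rcases hα.eq_or_lt with rfl | hα
  · have : bs.indSign a S = 0 := Finset.sum_eq_zero fun n hn => by
      rw [norm_le_zero_iff.1 (ha n hn), zero_smul]
    simp [this, bs.N_zero]
  have hα' : (α : 𝕜) ≠ 0 := by exact_mod_cast hα.ne'
  have hscale : bs.indSign a S = (α : 𝕜) • bs.indSign (fun n => (α : 𝕜)⁻¹ * a n) S := by
    rw [smul_indSign]
    simp only [mul_inv_cancel_left₀ hα']
  have h1 := bs.N_indSign_rpow_le_of_norm_le_one hp hD (a := fun n => (α : 𝕜)⁻¹ * a n)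
    fun n hn => by
      rw [norm_mul, norm_inv, RCLike.norm_ofReal, abs_of_pos hα, inv_mul_le_iff₀ hα, mul_one]
      exact ha n hn
  have h3 : bs.N (bs.indSign (fun n => (α : 𝕜)⁻¹ * a n) S) ≤ ((2 ^ p - 1)⁻¹) ^ (1 / p) * D := by
    rw [← Real.rpow_le_rpow_iff (bs.N_nonneg _) (by positivity) hp,
      Real.mul_rpow (by positivity) hD0, ← Real.rpow_mul (by positivity),
      one_div_mul_cancel hp.ne', Real.rpow_one, inv_mul_eq_div]
    exact h1
  rw [hscale, bs.N_smul, RCLike.norm_ofReal, abs_of_pos hα, mul_left_comm]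
  gcongr

end Convexity

variable {bs : PBasis 𝕜 X p} {C D : ℝ}

theorem IsQuasiGreedyWith.N_proj_le (hp : 0 < p) (hC : bs.IsQuasiGreedyWith C) {f : X}
    {A : Finset ℕ} (hA : bs.IsGreedySet f A) :
    bs.N (bs.proj A f) ≤ 2 ^ (1 / p) * (1 + C) * bs.N f := by
  have h := bs.N_sub_le hp f (f - bs.proj A f)
  rw [sub_sub_cancel] at h
  refine h.trans ?_
  rw [mul_assoc, add_mul, one_mul]
  gcongr
  exact hC f A hA

theorem IsAlmostGreedyWith.isQuasiGreedyWith (h : bs.IsAlmostGreedyWith C) :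
    bs.IsQuasiGreedyWith C := fun f A hA => by
  simpa [proj] using h f A ∅ hA (by simp)

theorem IsSeparatedWith.isQuasiGreedyWith (h : bs.IsSeparatedWith C) :
    bs.IsQuasiGreedyWith C := fun f A hA => by
  simpa [indSign] using h f A ∅ 0 hA (by simp) (Or.inl fun _ _ _ hb => by simp at hb)
    (fun _ hb => by simp at hb)

theorem IsAlmostGreedyWith.N_indSign_le (h : bs.IsAlmostGreedyWith C) {S T : Finset ℕ}
    (hST : Disjoint S T) (hcard : S.card ≤ T.card) {a b : ℕ → 𝕜} {α : ℝ}
    (ha : ∀ n ∈ S, ‖a n‖ ≤ α) (hb : ∀ n ∈ T, α ≤ ‖b n‖) :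
    bs.N (bs.indSign a S) ≤ C * bs.N (bs.indSign b T) := by
  have := h _ T S (bs.isGreedySet_add_indSign hST ha hb) hcard
  rwa [bs.proj_add_indSign_left hST, bs.proj_add_indSign_right hST, add_sub_cancel_left,
    add_sub_cancel_right] at this

theorem IsAlmostGreedyWith.isDominatingWith (hC : 0 ≤ C) (h : bs.IsAlmostGreedyWith C) :
    bs.IsDominatingWith (C * C) := by
  intro S T a b α hcard ha hb
  rcases S.eq_empty_or_nonempty with rfl | ⟨s, hs⟩
  · have := bs.N_nonneg (bs.indSign b T)
    simp only [indSign, Finset.sum_empty, bs.N_zero] at this ⊢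
    positivity
  have hα : 0 ≤ α := (norm_nonneg _).trans (ha s hs)
  obtain ⟨H, hH, hlt⟩ := exists_card_eq_after (S ∪ T) T.card
  have hS := (hlt.mono_left Finset.subset_union_left).disjoint
  have hT := (hlt.mono_left Finset.subset_union_right).disjoint
  have hnorm : ‖(α : 𝕜)‖ = α := by rw [RCLike.norm_ofReal, abs_of_nonneg hα]
  rw [mul_assoc]
  exact (h.N_indSign_le hS (hcard.trans hH.ge) ha (b := fun _ => (α : 𝕜))
    fun _ _ => hnorm.ge).trans
      (mul_le_mul_of_nonneg_left (h.N_indSign_le hT.symm hH.le (fun _ _ => hnorm.le) hb) hC)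

theorem IsSeparatedWith.mul_N_indSign_le (h : bs.IsSeparatedWith C) {S T : Finset ℕ}
    (hST : FinsetBefore S T ∨ FinsetBefore T S) (hcard : S.card ≤ T.card) (hT : T.Nonempty)
    {ε b : ℕ → 𝕜} (hε : IsSign ε S) {α : ℝ} (hb : ∀ n ∈ T, α ≤ ‖b n‖) :
    α * bs.N (bs.indSign ε S) ≤ C * bs.N (bs.indSign b T) := by
  have hdisj : Disjoint S T := hST.elim (·.disjoint) (·.disjoint.symm)
  obtain ⟨t, ht, hmin⟩ := T.exists_min_image (fun n => ‖b n‖) hT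
  set m : 𝕜 := ((‖b t‖ : ℝ) : 𝕜)
  have hm : ‖m‖ = ‖b t‖ := by simp [m]
  set f := bs.indSign (fun n => m * ε n) S + bs.indSign b T with hf
  have hcoef : bs.minCoef f T = ‖b t‖ := by
    refine le_antisymm ?_ ?_
    · exact (bs.minCoef_le ht).trans_eq (by rw [hf, bs.coord_add_indSign_right hdisj ht])
    · obtain ⟨n, hn, h⟩ := bs.exists_minCoef_eq f hT
      rw [h, hf, bs.coord_add_indSign_right hdisj hn]
      exact hmin n hn
  have hgr : bs.IsGreedySet f T := bs.isGreedySet_add_indSign hdisj (α := ‖b t‖)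
    (fun n hn => by rw [norm_mul, hm, hε n hn, mul_one]) hmin
  have := h f T S ε hgr hcard hST.symm hε
  rw [hcoef, bs.smul_indSign, hf, bs.proj_add_indSign_right hdisj, add_sub_cancel_left,
    add_sub_cancel_right, ← bs.smul_indSign, bs.N_smul, hm] at this
  exact (mul_le_mul_of_nonneg_right (hb t ht) (bs.N_nonneg _)).trans this

theorem IsSeparatedWith.isDominatingWith (hp : 0 < p) (hC : 0 ≤ C) (h : bs.IsSeparatedWith C) :
    bs.IsDominatingWith (((2 ^ p - 1)⁻¹) ^ (1 / p) * (C * C)) := by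
  have h2 : (0 : ℝ) < 2 ^ p - 1 := sub_pos.2 (Real.one_lt_rpow (by norm_num) hp)
  intro S T a b α hcard ha hb
  have hN := bs.N_nonneg (bs.indSign b T)
  rcases S.eq_empty_or_nonempty with rfl | hS
  · simp only [indSign, Finset.sum_empty, bs.N_zero] at hN ⊢
    positivity
  have hα : 0 ≤ α := hS.elim fun s hs => (norm_nonneg _).trans (ha s hs)
  have hT : T.Nonempty := Finset.card_pos.1 (hS.card_pos.trans_le hcard)
  obtain ⟨H, hH, hlt⟩ := exists_card_eq_after (S ∪ T) S.card
  have hHne : H.Nonempty := Finset.card_pos.1 (hS.card_pos.trans_eq hH.symm)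
  have hHT : α * bs.N (bs.indSign (fun _ => 1) H) ≤ C * bs.N (bs.indSign b T) :=
    h.mul_N_indSign_le (Or.inr (hlt.mono_left Finset.subset_union_right)) (hH.trans_le hcard) hT
      (fun _ _ => by simp) hb
  have hSH : ∀ ε : ℕ → 𝕜, IsSign ε S →
      bs.N (bs.indSign ε S) ≤ C * bs.N (bs.indSign (fun _ => 1) H) := fun ε hε => by
    simpa using h.mul_N_indSign_le (Or.inl (hlt.mono_left Finset.subset_union_left)) hH.ge hHne
      hε (b := fun _ => 1) (α := 1) (by simp)
  refine (bs.N_indSign_le_of_norm_le hp hSH hα ha).trans ?_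
  rw [mul_assoc, mul_left_comm α, mul_assoc C C]
  gcongr

theorem IsQuasiGreedyWith.isAlmostGreedyWith (hp : 0 < p) (hD : 0 ≤ D)
    (hC : bs.IsQuasiGreedyWith C) (hdom : bs.IsDominatingWith D) :
    bs.IsAlmostGreedyWith (2 ^ (1 / p) * (C + D * (2 ^ (1 / p) * (1 + C)))) := by
  intro f A B hA hcard
  set g := f - bs.proj B f with hg
  have hcoord : ∀ n, bs.coord n g = if n ∈ B then 0 else bs.coord n f := fun n => by
    rw [hg, map_sub, bs.proj_eq_indSign, bs.coord_indSign]
    split_ifs <;> simp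
  have hgr : bs.IsGreedySet g (A \ B) := by
    intro n hn m hm
    rw [Finset.mem_sdiff] at hn hm
    rw [hcoord, hcoord, if_neg hn.2]
    split_ifs with hmB
    · simp
    · exact hA n hn.1 m fun hmA => hm ⟨hmA, hmB⟩
  have hAB : bs.proj (A \ B) g = bs.proj (A \ B) f :=
    bs.proj_congr fun n hn => by rw [hcoord, if_neg (Finset.mem_sdiff.1 hn).2]
  have hsplit : f - bs.proj A f = (g - bs.proj (A \ B) g) + bs.proj (B \ A) f := by
    have h1 := bs.proj_union (Finset.disjoint_sdiff (s := A) (t := B)) f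
    have h2 := bs.proj_union (Finset.disjoint_sdiff (s := B) (t := A)) f
    rw [Finset.union_sdiff_self_eq_union] at h1 h2
    rw [Finset.union_comm, h1] at h2
    rw [hAB, hg, sub_sub, ← h2]
    abel
  have hcard' : (B \ A).card ≤ (A \ B).card := by
    have h1 := Finset.card_sdiff_add_card_inter A B
    have h2 := Finset.card_sdiff_add_card_inter B A
    rw [Finset.inter_comm] at h2
    omega
  have hBA : bs.N (bs.proj (B \ A) f) ≤ D * bs.N (bs.proj (A \ B) g) := by
    rcases (A \ B).eq_empty_or_nonempty with h0 | h0
    · have : B \ A = ∅ := Finset.card_eq_zero.1 (by simpa [h0] using hcard')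
      simp [this, h0, proj, bs.N_zero]
    obtain ⟨t, ht, hmin⟩ := (A \ B).exists_min_image (fun n => ‖bs.coord n f‖) h0
    rw [hAB]
    exact hdom _ _ _ _ ‖bs.coord t f‖ hcard'
      (fun n hn => hA t (Finset.mem_sdiff.1 ht).1 n (Finset.mem_sdiff.1 hn).2) hmin
  rw [hsplit]
  refine (bs.N_add_le hp _ _).trans ?_
  rw [mul_assoc, add_mul, mul_assoc D]
  gcongr
  · exact hC g _ hgr
  · exact hBA.trans (mul_le_mul_of_nonneg_left (hC.N_proj_le hp hgr) hD)

theorem IsQuasiGreedyWith.N_sub_proj_le (hp : 0 < p) (hC0 : 0 ≤ C) (hD : 0 ≤ D)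
    (hC : bs.IsQuasiGreedyWith C) (hdom : bs.IsDominatingWith D) {f : X} {A B : Finset ℕ}
    {ε : ℕ → 𝕜} (hA : bs.IsGreedySet f A) (hcard : B.card ≤ A.card) (hAB : Disjoint A B) :
    bs.N (f - bs.proj A f) ≤
      (C + 2 ^ (1 / p) * (C + 2 ^ (1 / p) * (2 * (D * (2 ^ (1 / p) * (1 + C)))))) *
        bs.N (f - ((bs.minCoef f A : ℝ) : 𝕜) • bs.indSign ε B) := by
  set α := bs.minCoef f A
  set g := f - (α : 𝕜) • bs.indSign ε B with hg
  have hN := bs.N_nonneg g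
  rcases A.eq_empty_or_nonempty with rfl | hne
  · have hB : B = ∅ := Finset.card_eq_zero.1 (by simpa using hcard)
    have hgf : g = f := by simp [hg, hB, indSign]
    have := hC f ∅ hA
    rw [← hgf] at this ⊢
    refine this.trans (mul_le_mul_of_nonneg_right ?_ hN)
    exact le_add_of_nonneg_right (by positivity)
  have hcoord : ∀ n, n ∉ B → bs.coord n g = bs.coord n f := fun n hn => by
    simp [hg, bs.coord_indSign, hn]
  have hle : ∀ n ∈ A, α ≤ ‖bs.coord n f‖ := fun n hn => bs.minCoef_le hn
  have hge : ∀ n, n ∉ A → ‖bs.coord n f‖ ≤ α := fun n hn => by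
    obtain ⟨t, ht, h⟩ := bs.exists_minCoef_eq f hne
    exact (hA t ht n hn).trans_eq h.symm
  set B₁ := B.filter fun n => α ≤ ‖bs.coord n g‖
  set B₀ := B.filter fun n => ¬ α ≤ ‖bs.coord n g‖
  have hG : ∀ n ∈ A ∪ B₁, α ≤ ‖bs.coord n g‖ := fun n hn => by
    rcases Finset.mem_union.1 hn with h | h
    · rw [hcoord n (Finset.disjoint_left.1 hAB h)]
      exact hle n h
    · exact (Finset.mem_filter.1 h).2
  have hgr : bs.IsGreedySet g (A ∪ B₁) := by
    intro n hn m hm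
    refine le_trans ?_ (hG n hn)
    rw [Finset.mem_union, not_or] at hm
    by_cases hB : m ∈ B
    · exact (not_le.1 fun h => hm.2 (Finset.mem_filter.2 ⟨hB, h⟩)).le
    · rw [hcoord m hB]
      exact hge m hm.1
  have hcardG : B.card ≤ (A ∪ B₁).card :=
    hcard.trans (Finset.card_le_card Finset.subset_union_left)
  have hdomB : bs.N (bs.proj B f) ≤ D * bs.N (bs.proj (A ∪ B₁) g) :=
    hdom _ _ _ _ α hcardG (fun n hn => hge n (Finset.disjoint_right.1 hAB hn)) hG
  have hdomB₀ : bs.N (bs.proj B₀ g) ≤ D * bs.N (bs.proj (A ∪ B₁) g) :=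
    hdom _ _ _ _ α ((Finset.card_filter_le _ _).trans hcardG)
      (fun n hn => (not_le.1 (Finset.mem_filter.1 hn).2).le) hG
  have hprojB : bs.proj B g = bs.proj B₁ g + bs.proj B₀ g :=
    (Finset.sum_filter_add_sum_filter_not B _ _).symm
  have hprojA : bs.proj A g = bs.proj A f :=
    bs.proj_congr fun n hn => hcoord n (Finset.disjoint_left.1 hAB hn)
  have hresid : g - bs.proj B g = f - bs.proj B f := by
    rw [hg, bs.proj_sub, bs.smul_indSign, bs.proj_indSign subset_rfl]
    abel
  have hsplit : f - bs.proj A f =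
      (g - bs.proj (A ∪ B₁) g) + (bs.proj B f - bs.proj B₀ g) := by
    have hunion : bs.proj (A ∪ B₁) g = bs.proj A g + bs.proj B₁ g :=
      bs.proj_union (hAB.mono_right (Finset.filter_subset _ _)) g
    have hregroup : g - (bs.proj A f + bs.proj B₁ g) + (bs.proj B f - bs.proj B₀ g) =
        g - (bs.proj B₁ g + bs.proj B₀ g) + bs.proj B f - bs.proj A f := by abel
    rw [hunion, hprojA, hregroup, ← hprojB, hresid, sub_add_cancel]
  have hproj := mul_le_mul_of_nonneg_left (hC.N_proj_le hp hgr) hD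
  have hdiff : bs.N (bs.proj B f - bs.proj B₀ g) ≤
      2 ^ (1 / p) * (2 * (D * (2 ^ (1 / p) * (1 + C)))) * bs.N g := by
    refine (bs.N_sub_le hp _ _).trans ?_
    rw [mul_assoc]
    gcongr
    linarith
  rw [hsplit]
  refine (bs.N_add_le hp _ _).trans ?_
  rw [add_mul C, mul_assoc (2 ^ (1 / p)), add_mul C]
  refine le_add_of_nonneg_of_le (by positivity) ?_
  gcongr
  exact hC g _ hgr

end PBasis

/-- (Theorem 1.7, i) ⟺ iv).) A basis of a `p`-Banach space is almost greedy
iff there is `C > 0` with `‖f − P_A(f)‖ ≤ C‖f − (min_{n∈A}|x_n^*(f)|)·𝟙_{ε,B}‖` for all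
`f`, greedy sets `A`, sets `B` with `|B| ≤ |A|` and `A < B` or `B < A`, and signs `ε`. -/
theorem almost_greedy_iff_separated_signed_polynomials {𝕜 : Type*} [RCLike 𝕜] {X : Type*}
    [AddCommGroup X] [Module 𝕜 X] {p : ℝ} (hp : 0 < p) (hp1 : p ≤ 1) (bs : PBasis 𝕜 X p) :
    (∃ C : ℝ, 0 < C ∧ bs.IsAlmostGreedyWith C) ↔
      (∃ C : ℝ, 0 < C ∧ ∀ (f : X) (A B : Finset ℕ) (ε : ℕ → 𝕜),
        bs.IsGreedySet f A → B.card ≤ A.card →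
        (PBasis.FinsetBefore A B ∨ PBasis.FinsetBefore B A) → PBasis.IsSign ε B →
        bs.N (f - bs.proj A f) ≤
          C * bs.N (f - ((bs.minCoef f A : ℝ) : 𝕜) • bs.indSign ε B)) := by
  constructor
  · rintro ⟨C, hC, h⟩
    refine ⟨_, ?_, fun f A B ε hA hcard hAB _ =>
      h.isQuasiGreedyWith.N_sub_proj_le hp hC.le (by positivity) (h.isDominatingWith hC.le) hA
        hcard (hAB.elim (·.disjoint) (·.disjoint.symm))⟩
    positivity
  · rintro ⟨C, hC, h⟩
    have h' : bs.IsSeparatedWith C := h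
    have h2 : (0 : ℝ) < 2 ^ p - 1 := sub_pos.2 (Real.one_lt_rpow (by norm_num) hp)
    refine ⟨_, ?_, h'.isQuasiGreedyWith.isAlmostGreedyWith hp (by positivity)
      (h'.isDominatingWith hp hC.le)⟩
    positivity
end
end
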